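/- Set α = N(2a + b + 1/2), β = N(4a + b + 3/2), and μ(x) = e^{−ω r²/2} Π_{i=1}^N |x_i² − x_{i+1}²|^a x_i^b. For every spin state |s⟩ ∈ Σ and every nonnegative integer k, the following Σ-valued functions are eigenfunctions of H_1 on C_1 with eigenvalue E_k = Nω(4a + 2b + 1) + 4kω: (i) Ψ^{(0)}_k = μ · L^{(α−1)}_k(ω r²) Λ|s⟩ for k ≥ 0; (ii) Ψ^{(1)}_k = μ · L^{(α+1)}_{k−1}(ω r²) · [ N Σ_i x_i² |s_i⟩ − r² Λ|s⟩ ] for k ≥ 1; (iii) Ψ^{(2)}_k = μ · L^{(α+3)}_{k−2}(ω r²) · [ N(α+1) Σ_i x_i⁴ − β r⁴ ] Λ|s⟩ for k ≥ 2. That is, H_1 Ψ^{(j)}_k = E_k Ψ^{(j)}_k at every point of C_1 in each case. -/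

import Mathlib

noncomputable section

/-- The spin space `Σ`: complex functions on `Fin N → Fin d`. -/
abbrev Spin (N d : ℕ) : Type := (Fin N → Fin d) → ℂ

/-- Partial derivative `∂_i F` of a function of `N` real variables. -/
noncomputable def pd {N : ℕ} {E : Type} [NormedAddCommGroup E] [NormedSpace ℝ E]
    (i : Fin N) (F : (Fin N → ℝ) → E) : (Fin N → ℝ) → E :=
  fun x => fderiv ℝ F x (Pi.single i 1)

/-- The spin exchange operator `S_{ij}`, transposing the `i`-th and `j`-th spin slots. -/
def Sop {N d : ℕ} (i j : Fin N) (v : Spin N d) : Spin N d :=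
  fun c => v (c ∘ Equiv.swap i j)

/-- The action of a permutation `π ∈ S_N` on the spin space, permuting the `N` spin slots. -/
def spinPerm {N d : ℕ} (π : Equiv.Perm (Fin N)) (v : Spin N d) : Spin N d :=
  fun c => v (c ∘ π)

/-- The spin vector `|s_i⟩ = (1/N!) ∑_{π ∈ S_N, π(1) = i} π |s⟩`. -/
noncomputable def sComp {N d : ℕ} [NeZero N] (s : Spin N d) (i : Fin N) : Spin N d :=
  (N.factorial : ℂ)⁻¹ •
    ∑ π ∈ Finset.univ.filter (fun π : Equiv.Perm (Fin N) => π 0 = i), spinPerm π s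

/-- The symmetrization `Λ|s⟩ = ∑ i, |s_i⟩`. -/
noncomputable def Lam {N d : ℕ} [NeZero N] (s : Spin N d) : Spin N d :=
  ∑ i : Fin N, sComp s i

/-- The configuration space `C_1 = {x : 0 < x_1 < ⋯ < x_N}`. -/
def C1 (N : ℕ) [NeZero N] : Set (Fin N → ℝ) := {x | StrictMono x ∧ 0 < x 0}

/-- The Hamiltonian `H_1 = -∑ i ∂_i² + V_1` with
`V_1 = ω² r² + ∑ i b(b-1)/x_i² + ∑ i 8a² x_i²/((x_i² - x_{i-1}²)(x_i² - x_{i+1}²))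
  + 4a ∑ i (x_i² + x_{i+1}²)(x_i² - x_{i+1}²)⁻² (a - S_{i,i+1})` (indices cyclic). -/
noncomputable def H1 {N d : ℕ} [NeZero N] (a b ω : ℝ)
    (Ψ : (Fin N → ℝ) → Spin N d) : (Fin N → ℝ) → Spin N d :=
  fun x =>
    -(∑ i : Fin N, pd i (pd i Ψ) x)
    + (ω ^ 2 * (∑ i : Fin N, (x i) ^ 2)
        + (∑ i : Fin N, b * (b - 1) / (x i) ^ 2)
        + ∑ i : Fin N, 8 * a ^ 2 * (x i) ^ 2 /
            (((x i) ^ 2 - (x (i - 1)) ^ 2) * ((x i) ^ 2 - (x (i + 1)) ^ 2))) • Ψ x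
    + (4 * a) • ∑ i : Fin N,
        (((x i) ^ 2 + (x (i + 1)) ^ 2) / ((x i) ^ 2 - (x (i + 1)) ^ 2) ^ 2) •
          (a • Ψ x - Sop i (i + 1) (Ψ x))

/-- The gauge factor `μ(x) = exp(-ω r²/2) ∏ i |x_i² - x_{i+1}²|^a x_i^b`. -/
noncomputable def mu1 {N : ℕ} [NeZero N] (a b ω : ℝ) (x : Fin N → ℝ) : ℝ :=
  Real.exp (-(ω / 2) * ∑ i : Fin N, (x i) ^ 2) *
    ∏ i : Fin N, (|(x i) ^ 2 - (x (i + 1)) ^ 2| ^ a * (x i) ^ b)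

/-- The generalized binomial coefficient `C(x, j) = x(x-1)⋯(x-j+1)/j!`. -/
noncomputable def genBinom (x : ℝ) (j : ℕ) : ℝ :=
  (descPochhammer ℝ j).eval x / j.factorial

/-- The generalized Laguerre polynomial
`L^{(λ)}_n(t) = ∑_{k=0}^n (-1)^k C(n+λ, n-k) t^k / k!`. -/
noncomputable def laguerre (lam : ℝ) (n : ℕ) (t : ℝ) : ℝ :=
  ∑ k ∈ Finset.range (n + 1),
    (-1 : ℝ) ^ k * genBinom ((n : ℝ) + lam) (n - k) * t ^ k / (k.factorial : ℝ)

/-! ### Laguerre polynomials -/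

/-- The coefficient of the Laguerre polynomial. -/
noncomputable def lagC (lam : ℝ) (n k : ℕ) : ℝ :=
  if k ≤ n then (-1 : ℝ) ^ k * genBinom ((n : ℝ) + lam) (n - k) / (k.factorial : ℝ) else 0

/-- The Laguerre polynomial as a polynomial. -/
noncomputable def lagP (lam : ℝ) (n : ℕ) : Polynomial ℝ :=
  ∑ k ∈ Finset.range (n + 1), Polynomial.C (lagC lam n k) * Polynomial.X ^ k

lemma lagP_eval (lam : ℝ) (n : ℕ) (t : ℝ) : (lagP lam n).eval t = laguerre lam n t := by
  unfold lagP laguerre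
  rw [Polynomial.eval_finsetSum]
  refine Finset.sum_congr rfl fun k hk => ?_
  have : k ≤ n := by simpa [Nat.lt_succ_iff] using hk
  simp [lagC, this]
  ring

lemma lagP_coeff (lam : ℝ) (n k : ℕ) : (lagP lam n).coeff k = lagC lam n k := by
  unfold lagP
  simp only [Polynomial.finsetSum_coeff, Polynomial.coeff_C_mul_X_pow]
  rw [Finset.sum_ite_eq]
  split_ifs with h
  · rfl
  · have : ¬ k ≤ n := by simpa [Nat.lt_succ_iff] using h
    simp [lagC, this]

lemma lagC_rec (lam : ℝ) (n k : ℕ) :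
    ((k : ℝ) + 1) * (k + lam + 1) * lagC lam n (k + 1) = -((n : ℝ) - k) * lagC lam n k := by
  rcases lt_trichotomy k n with h | h | h
  · obtain ⟨m, rfl⟩ := Nat.exists_eq_add_of_lt h
    have h1 : k + 1 ≤ k + m + 1 := by omega
    have h2 : k ≤ k + m + 1 := by omega
    have e1 : k + m + 1 - (k + 1) = m := by omega
    have e2 : k + m + 1 - k = m + 1 := by omega
    simp only [lagC, h1, h2, if_true, e1, e2, genBinom, descPochhammer_succ_eval,
      Nat.factorial_succ]
    have := Nat.factorial_pos k
    have := Nat.factorial_pos m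
    push_cast
    field_simp
    ring
  · subst h
    simp [lagC]
  · have h1 : ¬ k ≤ n := by omega
    have h2 : ¬ k + 1 ≤ n := by omega
    simp [lagC, h1, h2]

lemma lagP_ode (lam : ℝ) (n : ℕ) :
    Polynomial.X * (lagP lam n).derivative.derivative
      + (Polynomial.C (lam + 1) - Polynomial.X) * (lagP lam n).derivative
      + Polynomial.C (n : ℝ) * lagP lam n = 0 := by
  ext k
  have h := lagC_rec lam n k
  rw [sub_mul]
  cases k with
  | zero =>
    simp [Polynomial.coeff_derivative, lagP_coeff, -map_natCast] at h ⊢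
    linarith
  | succ k =>
    simp only [Polynomial.coeff_add, Polynomial.coeff_sub, Polynomial.coeff_X_mul,
      Polynomial.coeff_C_mul, Polynomial.coeff_derivative, lagP_coeff, Polynomial.coeff_zero]
    push_cast at h ⊢
    linarith

/-! ### Partial derivatives -/

section pds
variable {N : ℕ} {E : Type} [NormedAddCommGroup E] [NormedSpace ℝ E]

lemma pd_eq {i : Fin N} {F : (Fin N → ℝ) → E} {F' : (Fin N → ℝ) →L[ℝ] E} {x : Fin N → ℝ}
    (h : HasFDerivAt F F' x) :
    pd i F x = F' (Pi.single i 1) := by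
  unfold pd; rw [h.fderiv]

lemma pd_congr {i : Fin N} {F G : (Fin N → ℝ) → E} {x} (h : F =ᶠ[nhds x] G) :
    pd i F x = pd i G x := by
  unfold pd; rw [h.fderiv_eq]

lemma pd_smul {i : Fin N} {f : (Fin N → ℝ) → ℝ} {F : (Fin N → ℝ) → E} {x}
    (hf : DifferentiableAt ℝ f x) (hF : DifferentiableAt ℝ F x) :
    pd i (fun y => f y • F y) x = pd i f x • F x + f x • pd i F x := by
  rw [pd_eq (F := fun y => f y • F y) (hf.hasFDerivAt.smul hF.hasFDerivAt)]
  simp [pd, add_comm]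

lemma pd_add {i : Fin N} {F G : (Fin N → ℝ) → E} {x}
    (hF : DifferentiableAt ℝ F x) (hG : DifferentiableAt ℝ G x) :
    pd i (fun y => F y + G y) x = pd i F x + pd i G x := by
  rw [pd_eq (F := fun y => F y + G y) (hF.hasFDerivAt.add hG.hasFDerivAt)]
  simp [pd]

lemma pd_diff {i : Fin N} {F : (Fin N → ℝ) → E} {x} (h : ContDiffAt ℝ 2 F x) :
    DifferentiableAt ℝ (pd i F) x := by
  have : ContDiffAt ℝ 1 (fderiv ℝ F) x := h.fderiv_right (by norm_num)
  exact (this.differentiableAt (by norm_num)).clm_apply (differentiableAt_const _)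

lemma pd2_smul {i : Fin N} {f : (Fin N → ℝ) → ℝ} {F : (Fin N → ℝ) → E} {x}
    (hf : ContDiffAt ℝ 2 f x) (hF : ContDiffAt ℝ 2 F x) :
    pd i (pd i (fun y => f y • F y)) x =
      pd i (pd i f) x • F x + (2 * pd i f x) • pd i F x + f x • pd i (pd i F) x := by
  have ef : ∀ᶠ y in nhds x, ContDiffAt ℝ 2 f y := hf.eventually (by simp)
  have eF : ∀ᶠ y in nhds x, ContDiffAt ℝ 2 F y := hF.eventually (by simp)
  have e : pd i (fun y => f y • F y) =ᶠ[nhds x]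
      fun y => pd i f y • F y + f y • pd i F y := by
    filter_upwards [ef, eF] with y h1 h2
    exact pd_smul (h1.differentiableAt (by norm_num)) (h2.differentiableAt (by norm_num))
  have df := hf.differentiableAt (n := 2) (by norm_num)
  have dF := hF.differentiableAt (n := 2) (by norm_num)
  rw [pd_congr e, pd_add (F := fun y => pd i f y • F y) (G := fun y => f y • pd i F y)
    ((pd_diff hf).smul dF) (df.smul (pd_diff hF)),
    pd_smul (pd_diff hf) dF, pd_smul df (pd_diff hF)]
  module

lemma hasFDerivAt_coord (i : Fin N) (x : Fin N → ℝ) :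
    HasFDerivAt (fun y : Fin N → ℝ => y i) (ContinuousLinearMap.proj (R := ℝ) i) x :=
  (ContinuousLinearMap.proj (R := ℝ) (φ := fun _ : Fin N => ℝ) i).hasFDerivAt

lemma hasFDerivAt_sqsum (x : Fin N → ℝ) :
    HasFDerivAt (fun y : Fin N → ℝ => ∑ i, y i ^ 2)
      (∑ i, (2 * x i) • ContinuousLinearMap.proj (R := ℝ) (φ := fun _ : Fin N => ℝ) i) x := by
  refine HasFDerivAt.fun_sum fun i _ => ?_
  simpa using (hasFDerivAt_coord i x).pow 2

lemma pd_sqsum (j : Fin N) (x : Fin N → ℝ) :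
    pd j (fun y : Fin N → ℝ => ∑ i, y i ^ 2) x = 2 * x j := by
  rw [pd_eq (hasFDerivAt_sqsum x)]
  simp [Pi.single_apply]

/-- derivatives of a radial function -/
lemma pd_radial {L0 L1 : ℝ → ℝ} (h : ∀ t, HasDerivAt L0 (L1 t) t) (ω : ℝ) (j : Fin N)
    (x : Fin N → ℝ) :
    pd j (fun y : Fin N → ℝ => L0 (ω * ∑ i, y i ^ 2)) x
      = 2 * ω * x j * L1 (ω * ∑ i, x i ^ 2) := by
  have := (h (ω * ∑ i, x i ^ 2)).comp_hasFDerivAt x ((hasFDerivAt_sqsum x).const_mul ω)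
  rw [pd_eq (F := fun y : Fin N → ℝ => L0 (ω * ∑ i, y i ^ 2)) this]
  simp [Pi.single_apply]
  ring

lemma pd2_radial {L0 L1 L2 : ℝ → ℝ} (h : ∀ t, HasDerivAt L0 (L1 t) t)
    (h' : ∀ t, HasDerivAt L1 (L2 t) t) (ω : ℝ) (j : Fin N)
    (x : Fin N → ℝ) :
    pd j (pd j (fun y : Fin N → ℝ => L0 (ω * ∑ i, y i ^ 2))) x
      = 2 * ω * L1 (ω * ∑ i, x i ^ 2) + 4 * ω ^ 2 * x j ^ 2 * L2 (ω * ∑ i, x i ^ 2) := by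
  have e : pd j (fun y : Fin N → ℝ => L0 (ω * ∑ i, y i ^ 2)) =
      fun y => (2 * ω * y j) • L1 (ω * ∑ i, y i ^ 2) := by
    funext y; rw [pd_radial h]; rfl
  have d1 : HasFDerivAt (fun y : Fin N → ℝ => 2 * ω * y j)
    ((2 * ω) • ContinuousLinearMap.proj (R := ℝ) (φ := fun _ : Fin N => ℝ) j) x :=
    (hasFDerivAt_coord j x).const_mul (2 * ω)
  have d2 : DifferentiableAt ℝ (fun y : Fin N → ℝ => L1 (ω * ∑ i, y i ^ 2)) x :=
    ((h' (ω * ∑ i, x i ^ 2)).comp_hasFDerivAt x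
      ((hasFDerivAt_sqsum x).const_mul ω)).differentiableAt
  rw [e, pd_smul d1.differentiableAt d2, pd_radial h', pd_eq d1]
  simp
  ring

end pds

/-! ### The gauge factor -/

section gauge
variable {N : ℕ} [NeZero N]

lemma C1_open : IsOpen (C1 N) := by
  have : C1 N = (⋂ i : Fin N, ⋂ j : Fin N, {x : Fin N → ℝ | i < j → x i < x j})
      ∩ {x | 0 < x 0} := by
    ext x; simp [C1, StrictMono]
  rw [this]
  refine IsOpen.inter (isOpen_iInter_of_finite fun i => isOpen_iInter_of_finite fun j => ?_) ?_
  · by_cases h : i < j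
    · simpa [h] using isOpen_lt (continuous_apply i) (continuous_apply j)
    · simp [h]
  · exact isOpen_lt continuous_const (continuous_apply 0)

lemma C1_pos {x : Fin N → ℝ} (hx : x ∈ C1 N) (i : Fin N) : 0 < x i :=
  hx.2.trans_le (hx.1.monotone (Fin.zero_le i))

lemma C1_ne {x : Fin N → ℝ} (hx : x ∈ C1 N) {i j : Fin N} (h : i ≠ j) :
    x i ^ 2 - x j ^ 2 ≠ 0 := by
  intro h0
  have := (pow_left_inj₀ (C1_pos hx i).le (C1_pos hx j).le two_ne_zero).1 (sub_eq_zero.1 h0)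
  exact h (hx.1.injective this)

lemma fin_succ_ne (hN : 3 ≤ N) (i : Fin N) : i + 1 ≠ i := by
  obtain ⟨n, rfl⟩ : ∃ n, N = n + 2 := ⟨N - 2, by omega⟩
  intro h
  have : (1 : Fin (n + 2)) = 0 := by simpa using h
  exact absurd this (by simp)

lemma fin_pred_ne (hN : 3 ≤ N) (i : Fin N) : i - 1 ≠ i := by
  intro h
  have := fin_succ_ne hN (i - 1)
  rw [sub_add_cancel] at this
  exact this h.symm

/-- `1/(x_i² - x_{i+1}²)` -/
noncomputable def gA (x : Fin N → ℝ) (i : Fin N) : ℝ := (x i ^ 2 - x (i + 1) ^ 2)⁻¹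
/-- `1/(x_i² - x_{i-1}²)` -/
noncomputable def gB (x : Fin N → ℝ) (i : Fin N) : ℝ := (x i ^ 2 - x (i - 1) ^ 2)⁻¹

lemma gB_succ (x : Fin N → ℝ) (i : Fin N) : gB x (i + 1) = - gA x i := by
  unfold gA gB
  rw [add_sub_cancel_right, ← inv_neg, neg_sub]

lemma sum_shift (f : Fin N → ℝ) : ∑ i, f (i + 1) = ∑ i, f i :=
  Equiv.sum_comp (Equiv.addRight (1 : Fin N)) f

/-- logarithmic gradient without the harmonic term -/
noncomputable def wp (a b : ℝ) (x : Fin N → ℝ) (i : Fin N) : ℝ :=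
  b / x i + 2 * a * x i * (gA x i + gB x i)

/-- logarithm of the gauge factor -/
noncomputable def logmu (a b ω : ℝ) (x : Fin N → ℝ) : ℝ :=
  -(ω / 2) * (∑ i, x i ^ 2) +
    ∑ i, (a * Real.log (x i ^ 2 - x (i + 1) ^ 2) + b * Real.log (x i))

lemma mu1_eq (hN : 3 ≤ N) (a b ω : ℝ) {x : Fin N → ℝ} (hx : x ∈ C1 N) :
    mu1 a b ω x = Real.exp (logmu a b ω x) := by
  unfold mu1 logmu
  rw [Real.exp_add, Real.exp_sum]
  congr 1
  refine Finset.prod_congr rfl fun i _ => ?_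
  have h := C1_ne hx (fin_succ_ne hN i).symm
  rw [Real.exp_add, Real.rpow_def_of_pos (abs_pos.2 h), Real.rpow_def_of_pos (C1_pos hx i),
    Real.log_abs, mul_comm a, mul_comm b]

lemma logmu_contDiff (hN : 3 ≤ N) (a b ω : ℝ) {x : Fin N → ℝ} (hx : x ∈ C1 N) :
    ContDiffAt ℝ 2 (logmu a b ω) x := by
  unfold logmu
  refine ContDiffAt.add (by fun_prop) (ContDiffAt.sum fun i _ => ?_)
  have h := C1_ne hx (fin_succ_ne hN i).symm
  have h' := (C1_pos hx i).ne'
  have c1 : ContDiffAt ℝ 2 (fun y : Fin N → ℝ => y i ^ 2 - y (i + 1) ^ 2) x := by fun_prop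
  have c2 : ContDiffAt ℝ 2 (fun y : Fin N → ℝ => y i) x := by fun_prop
  exact (contDiffAt_const.mul (c1.log h)).add (contDiffAt_const.mul (c2.log h'))

lemma mu1_ev (hN : 3 ≤ N) (a b ω : ℝ) {x : Fin N → ℝ} (hx : x ∈ C1 N) :
    mu1 a b ω =ᶠ[nhds x] fun y => Real.exp (logmu a b ω y) := by
  filter_upwards [C1_open.mem_nhds hx] with y hy
  exact mu1_eq hN a b ω hy

lemma mu1_contDiff (hN : 3 ≤ N) (a b ω : ℝ) {x : Fin N → ℝ} (hx : x ∈ C1 N) :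
    ContDiffAt ℝ 2 (mu1 a b ω) x :=
  ((logmu_contDiff hN a b ω hx).exp).congr_of_eventuallyEq (mu1_ev hN a b ω hx)

lemma pd_logmu (hN : 3 ≤ N) (a b ω : ℝ) {x : Fin N → ℝ} (hx : x ∈ C1 N) (j : Fin N) :
    pd j (logmu a b ω) x = wp a b x j - ω * x j := by
  have key : HasFDerivAt (logmu a b ω) _ x :=
    ((hasFDerivAt_sqsum x).const_mul (-(ω / 2))).add
    (HasFDerivAt.fun_sum (u := Finset.univ) fun i _ =>
      (((((hasFDerivAt_coord i x).pow 2).sub ((hasFDerivAt_coord (i + 1) x).pow 2)).log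
        (C1_ne hx (fin_succ_ne hN i).symm)).const_mul a).add
      (((hasFDerivAt_coord i x).log (C1_pos hx i).ne').const_mul b))
  rw [pd_eq key]
  simp only [Nat.add_one_sub_one, ContinuousLinearMap.add_apply, ContinuousLinearMap.smul_apply,
    ContinuousLinearMap.sum_apply, ContinuousLinearMap.sub_apply, ContinuousLinearMap.proj_apply,
    smul_eq_mul, Pi.single_apply, nsmul_eq_mul]
  have e : ∀ i : Fin N, (i + 1 = j) = (i = j - 1) := fun i => by
    rw [eq_sub_iff_add_eq]
  simp only [e, Finset.sum_add_distrib, mul_sub, Finset.sum_sub_distrib, mul_ite, mul_one,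
    mul_zero, Finset.sum_ite_eq', Finset.mem_univ, if_true, sub_add_cancel]
  have hB : gB x j = - gA x (j - 1) := by rw [← gB_succ, sub_add_cancel]
  rw [wp, hB, gA, gA, sub_add_cancel]
  simp
  ring

lemma pd_wp (hN : 3 ≤ N) (a b ω : ℝ) {x : Fin N → ℝ} (hx : x ∈ C1 N) (j : Fin N) :
    pd j (fun y => wp a b y j - ω * y j) x =
      -b / x j ^ 2 + 2 * a * (gA x j + gB x j) - 4 * a * x j ^ 2 * (gA x j ^ 2 + gB x j ^ 2)
        - ω := by
  have n1 := C1_ne hx (fin_succ_ne hN j).symm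
  have n2 := C1_ne hx (fin_pred_ne hN j).symm
  have n0 := (C1_pos hx j).ne'
  have hj := hasFDerivAt_coord j x
  have i1 := (hasDerivAt_inv n1).comp_hasFDerivAt x
    ((hj.pow 2).sub ((hasFDerivAt_coord (j + 1) x).pow 2))
  have i2 := (hasDerivAt_inv n2).comp_hasFDerivAt x
    ((hj.pow 2).sub ((hasFDerivAt_coord (j - 1) x).pow 2))
  have i0 := ((hasDerivAt_inv n0).comp_hasFDerivAt x hj).const_mul b
  have key : HasFDerivAt (fun y => wp a b y j - ω * y j) _ x :=
    (i0.add ((hj.const_mul (2 * a)).mul (i1.add i2))).sub (hj.const_mul ω)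
  rw [pd_eq key]
  have d1 := fin_succ_ne hN j
  have d2 := fin_pred_ne hN j
  simp [Pi.single_apply, d1, d2, gA, gB]
  field_simp
  ring

lemma pd_mu (hN : 3 ≤ N) (a b ω : ℝ) {x : Fin N → ℝ} (hx : x ∈ C1 N) (j : Fin N) :
    pd j (mu1 a b ω) x = (wp a b x j - ω * x j) * mu1 a b ω x := by
  rw [pd_congr (mu1_ev hN a b ω hx), ← pd_logmu hN a b ω hx, mu1_eq hN a b ω hx]
  rw [pd_eq ((logmu_contDiff hN a b ω hx).differentiableAt (by norm_num)).hasFDerivAt.exp]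
  simp [pd, mul_comm]

lemma pd2_mu (hN : 3 ≤ N) (a b ω : ℝ) {x : Fin N → ℝ} (hx : x ∈ C1 N) (j : Fin N) :
    pd j (pd j (mu1 a b ω)) x = ((wp a b x j - ω * x j) ^ 2 +
      (-b / x j ^ 2 + 2 * a * (gA x j + gB x j) - 4 * a * x j ^ 2 * (gA x j ^ 2 + gB x j ^ 2)
        - ω)) * mu1 a b ω x := by
  have e : pd j (mu1 a b ω) =ᶠ[nhds x]
      fun y => (wp a b y j - ω * y j) • mu1 a b ω y := by
    filter_upwards [C1_open.mem_nhds hx] with y hy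
    exact pd_mu hN a b ω hy j
  have e2 : (fun y => wp a b y j - ω * y j) =ᶠ[nhds x] pd j (logmu a b ω) := by
    filter_upwards [C1_open.mem_nhds hx] with y hy
    exact (pd_logmu hN a b ω hy j).symm
  have d := (pd_diff (i := j) (logmu_contDiff hN a b ω hx)).congr_of_eventuallyEq e2
  rw [pd_congr e, pd_smul d ((mu1_contDiff hN a b ω hx).differentiableAt (by norm_num)),
    pd_wp hN a b ω hx, pd_mu hN a b ω hx]
  simp only [smul_eq_mul]
  ring

/-! ### cyclic sums -/

lemma sum_AB (x : Fin N → ℝ) : ∑ i, (gA x i + gB x i) = 0 := by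
  rw [Finset.sum_add_distrib, ← sum_shift (gB x)]
  simp [gB_succ]

lemma gA_mul (hN : 3 ≤ N) {x : Fin N → ℝ} (hx : x ∈ C1 N) (i : Fin N) :
    (x i ^ 2 - x (i + 1) ^ 2) * gA x i = 1 :=
  mul_inv_cancel₀ (C1_ne hx (fin_succ_ne hN i).symm)

lemma sum_x2AB (hN : 3 ≤ N) {x : Fin N → ℝ} (hx : x ∈ C1 N) :
    ∑ i, x i ^ 2 * (gA x i + gB x i) = N := by
  simp only [mul_add]
  rw [Finset.sum_add_distrib, ← sum_shift (fun i => x i ^ 2 * gB x i), ← Finset.sum_add_distrib]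
  have : ∀ i ∈ (Finset.univ : Finset (Fin N)),
      x i ^ 2 * gA x i + x (i + 1) ^ 2 * gB x (i + 1) = 1 := fun i _ => by
    rw [gB_succ]; linear_combination gA_mul hN hx i
  rw [Finset.sum_congr rfl this]; simp

lemma sum_x4AB (hN : 3 ≤ N) {x : Fin N → ℝ} (hx : x ∈ C1 N) :
    ∑ i, x i ^ 4 * (gA x i + gB x i) = 2 * ∑ i, x i ^ 2 := by
  simp only [mul_add]
  rw [Finset.sum_add_distrib, ← sum_shift (fun i => x i ^ 4 * gB x i), ← Finset.sum_add_distrib]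
  have : ∀ i ∈ (Finset.univ : Finset (Fin N)),
      x i ^ 4 * gA x i + x (i + 1) ^ 4 * gB x (i + 1) = x i ^ 2 + x (i + 1) ^ 2 := fun i _ => by
    rw [gB_succ]; linear_combination (x i ^ 2 + x (i + 1) ^ 2) * gA_mul hN hx i
  rw [Finset.sum_congr rfl this, Finset.sum_add_distrib, sum_shift (fun i => x i ^ 2)]
  ring

/-- the exchange coefficient -/
noncomputable def cE (x : Fin N → ℝ) (i : Fin N) : ℝ :=
  (x i ^ 2 + x (i + 1) ^ 2) / (x i ^ 2 - x (i + 1) ^ 2) ^ 2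

lemma sum_x2A2B2 (x : Fin N → ℝ) :
    ∑ i, x i ^ 2 * (gA x i ^ 2 + gB x i ^ 2) = ∑ i, cE x i := by
  simp only [mul_add]
  rw [Finset.sum_add_distrib, ← sum_shift (fun i => x i ^ 2 * gB x i ^ 2),
    ← Finset.sum_add_distrib]
  refine Finset.sum_congr rfl fun i _ => ?_
  rw [gB_succ, cE, gA, div_eq_mul_inv, ← inv_pow]
  ring

lemma sum_xw (hN : 3 ≤ N) (a b : ℝ) {x : Fin N → ℝ} (hx : x ∈ C1 N) :
    ∑ i, x i * wp a b x i = N * (b + 2 * a) := by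
  have : ∀ i ∈ (Finset.univ : Finset (Fin N)),
      x i * wp a b x i = b + 2 * a * (x i ^ 2 * (gA x i + gB x i)) := fun i _ => by
    have := (C1_pos hx i).ne'
    rw [wp]; field_simp
  rw [Finset.sum_congr rfl this, Finset.sum_add_distrib, ← Finset.mul_sum, sum_x2AB hN hx]
  simp; ring

lemma sum_x3w (hN : 3 ≤ N) (a b : ℝ) {x : Fin N → ℝ} (hx : x ∈ C1 N) :
    ∑ i, x i ^ 3 * wp a b x i = (b + 4 * a) * ∑ i, x i ^ 2 := by
  have : ∀ i ∈ (Finset.univ : Finset (Fin N)),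
      x i ^ 3 * wp a b x i = b * x i ^ 2 + 2 * a * (x i ^ 4 * (gA x i + gB x i)) := fun i _ => by
    have := (C1_pos hx i).ne'
    rw [wp]; field_simp
  rw [Finset.sum_congr rfl this, Finset.sum_add_distrib, ← Finset.mul_sum, ← Finset.mul_sum,
    sum_x4AB hN hx]
  ring

lemma sum_lap_mu (hN : 3 ≤ N) (a b ω : ℝ) {x : Fin N → ℝ} (hx : x ∈ C1 N) :
    ∑ j, ((wp a b x j - ω * x j) ^ 2 +
      (-b / x j ^ 2 + 2 * a * (gA x j + gB x j) - 4 * a * x j ^ 2 * (gA x j ^ 2 + gB x j ^ 2)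
        - ω)) =
    (ω ^ 2 * (∑ i : Fin N, (x i) ^ 2)
        + (∑ i : Fin N, b * (b - 1) / (x i) ^ 2)
        + ∑ i : Fin N, 8 * a ^ 2 * (x i) ^ 2 /
            (((x i) ^ 2 - (x (i - 1)) ^ 2) * ((x i) ^ 2 - (x (i + 1)) ^ 2)))
      + 4 * a * (a - 1) * (∑ i, cE x i) - N * ω * (4 * a + 2 * b + 1) := by
  have : ∀ j ∈ (Finset.univ : Finset (Fin N)),
    ((wp a b x j - ω * x j) ^ 2 +
      (-b / x j ^ 2 + 2 * a * (gA x j + gB x j) - 4 * a * x j ^ 2 * (gA x j ^ 2 + gB x j ^ 2)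
        - ω)) = ω ^ 2 * x j ^ 2 + b * (b - 1) / x j ^ 2 + 8 * a ^ 2 * (x j) ^ 2 /
            (((x j) ^ 2 - (x (j - 1)) ^ 2) * ((x j) ^ 2 - (x (j + 1)) ^ 2))
        + 4 * a * (a - 1) * (x j ^ 2 * (gA x j ^ 2 + gB x j ^ 2))
        + (4 * a * b + 2 * a) * (gA x j + gB x j)
        - (4 * a * ω) * (x j ^ 2 * (gA x j + gB x j)) - (ω + 2 * ω * b) := fun j _ => by
    have h0 := (C1_pos hx j).ne'
    rw [div_eq_mul_inv (8 * a ^ 2 * x j ^ 2), mul_inv, ← gA, ← gB, wp]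
    field_simp
    ring
  have h0 := sum_AB x
  have h1 := sum_x2AB hN hx
  have h2 := sum_x2A2B2 x
  rw [Finset.sum_congr rfl this]
  rw [Finset.sum_sub_distrib, Finset.sum_sub_distrib, Finset.sum_add_distrib,
    Finset.sum_add_distrib, Finset.sum_add_distrib, Finset.sum_add_distrib, ← Finset.mul_sum,
    ← Finset.mul_sum, ← Finset.mul_sum, ← Finset.mul_sum, h0, h1, h2]
  simp only [Finset.sum_const, Finset.card_univ, Fintype.card_fin, nsmul_eq_mul]
  ring

end gauge

/-! ### Main lemma -/

lemma Sop_smul {N d : ℕ} (i j : Fin N) (c : ℝ) (v : Spin N d) :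
    Sop i j (c • v) = c • Sop i j v := rfl

lemma main_lemma {N d : ℕ} [NeZero N] (hN : 3 ≤ N) (a b ω : ℝ)
    {x : Fin N → ℝ} (hx : x ∈ C1 N) (P : (Fin N → ℝ) → Spin N d) (hP : ContDiff ℝ 2 P)
    (n : ℕ) (m lam : ℝ) (hlam : lam = N * (2 * a + b + 1 / 2) + 2 * m - 1)
    (hE : ∑ i, x i • pd i P x = (2 * m) • P x)
    (hT : ∑ i, pd i (pd i P) x + (2 : ℝ) • ∑ i, wp a b x i • pd i P x =
      (4 * a) • ∑ i, cE x i • (P x - Sop i (i + 1) (P x))) :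
    H1 a b ω (fun y => (mu1 a b ω y * laguerre lam n (ω * ∑ i : Fin N, (y i) ^ 2)) • P y) x =
      ((N : ℝ) * ω * (4 * a + 2 * b + 1) + 4 * (n + m) * ω) •
        ((mu1 a b ω x * laguerre lam n (ω * ∑ i : Fin N, (x i) ^ 2)) • P x) := by
  simp only [← lagP_eval]
  set p := lagP lam n with hp
  set L0 : ℝ → ℝ := fun t => p.eval t with hL0
  set L1 : ℝ → ℝ := fun t => p.derivative.eval t with hL1
  set L2 : ℝ → ℝ := fun t => p.derivative.derivative.eval t with hL2
  have h01 : ∀ t, HasDerivAt L0 (L1 t) t := fun t => p.hasDerivAt t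
  have h12 : ∀ t, HasDerivAt L1 (L2 t) t := fun t => p.derivative.hasDerivAt t
  have hode : ∀ t, t * L2 t + (lam + 1 - t) * L1 t + n * L0 t = 0 := fun t => by
    have := congrArg (Polynomial.eval t) (lagP_ode lam n)
    simpa [-map_natCast] using this
  have cμ := mu1_contDiff hN a b ω hx
  have cL : ContDiffAt ℝ 2 (fun y : Fin N → ℝ => L0 (ω * ∑ i, y i ^ 2)) x := by
    have : ContDiff ℝ 2 L0 := by
      simpa [hL0] using p.contDiff_aeval (𝕜 := ℝ) 2
    exact this.contDiffAt.comp x (by fun_prop)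
  have hpd1 : ∀ i, pd i (fun y => mu1 a b ω y * L0 (ω * ∑ i, y i ^ 2)) x =
      mu1 a b ω x * ((wp a b x i - ω * x i) * L0 (ω * ∑ i, x i ^ 2) +
        2 * ω * x i * L1 (ω * ∑ i, x i ^ 2)) := fun i => by
    have := pd_smul (i := i) (cμ.differentiableAt (by norm_num)) (cL.differentiableAt (by norm_num))
    simp only [smul_eq_mul] at this
    rw [this, pd_mu hN a b ω hx, pd_radial h01]
    ring
  have hpd2 : ∀ i, pd i (pd i (fun y => mu1 a b ω y * L0 (ω * ∑ i, y i ^ 2))) x = _ := fun i => by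
    have := pd2_smul (i := i) cμ cL
    simp only [smul_eq_mul] at this
    rw [this, pd_mu hN a b ω hx, pd2_mu hN a b ω hx, pd_radial h01, pd2_radial h01 h12]
  have hpsi : ∀ i, pd i (pd i
      (fun y => (mu1 a b ω y * L0 (ω * ∑ i, y i ^ 2)) • P y)) x = _ := fun i => by
    rw [pd2_smul (cμ.mul cL) hP.contDiffAt, hpd1, hpd2]
  change H1 a b ω (fun y => (mu1 a b ω y * L0 (ω * ∑ i, y i ^ 2)) • P y) x =
    _ • ((mu1 a b ω x * L0 (ω * ∑ i, x i ^ 2)) • P x)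
  unfold H1
  simp only [hpsi, Sop_smul]
  have hlap := sum_lap_mu hN a b ω hx
  set V := (ω ^ 2 * (∑ i : Fin N, (x i) ^ 2)
        + (∑ i : Fin N, b * (b - 1) / (x i) ^ 2)
        + ∑ i : Fin N, 8 * a ^ 2 * (x i) ^ 2 /
            (((x i) ^ 2 - (x (i - 1)) ^ 2) * ((x i) ^ 2 - (x (i + 1)) ^ 2))) with hV
  have hode' := hode (ω * ∑ i, x i ^ 2)
  have hxw := sum_xw hN a b hx
  set M := mu1 a b ω x
  set l0 := L0 (ω * ∑ i, x i ^ 2)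
  set l1 := L1 (ω * ∑ i, x i ^ 2)
  set l2 := L2 (ω * ∑ i, x i ^ 2)
  set r := ∑ i, x i ^ 2 with hr
  -- the Laplacian
  have e1 : ∀ i ∈ (Finset.univ : Finset (Fin N)),
      ((((wp a b x i - ω * x i) ^ 2 +
      (-b / x i ^ 2 + 2 * a * (gA x i + gB x i) - 4 * a * x i ^ 2 * (gA x i ^ 2 + gB x i ^ 2)
        - ω)) * M * l0 + 2 * ((wp a b x i - ω * x i) * M) * (2 * ω * x i * l1) +
          M * (2 * ω * l1 + 4 * ω ^ 2 * x i ^ 2 * l2)) • P x +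
        (2 * (M * ((wp a b x i - ω * x i) * l0 + 2 * ω * x i * l1))) • pd i P x +
        (M * l0) • pd i (pd i P) x) =
      (M * l0 * ((wp a b x i - ω * x i) ^ 2 +
      (-b / x i ^ 2 + 2 * a * (gA x i + gB x i) - 4 * a * x i ^ 2 * (gA x i ^ 2 + gB x i ^ 2)
        - ω)) + 4 * ω * M * l1 * (x i * wp a b x i) +
          (4 * ω ^ 2 * M * (l2 - l1)) * x i ^ 2 + 2 * ω * M * l1) • P x +
        (2 * M * l0) • (wp a b x i • pd i P x) +
        (2 * M * (2 * ω * l1 - ω * l0)) • (x i • pd i P x) +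
        (M * l0) • pd i (pd i P) x := fun i _ => by module
  have e2 : ∀ i ∈ (Finset.univ : Finset (Fin N)),
      ((x i ^ 2 + x (i + 1) ^ 2) / (x i ^ 2 - x (i + 1) ^ 2) ^ 2) •
        (a • (M * l0) • P x - (M * l0) • Sop i (i + 1) (P x)) =
      (((a - 1) * M * l0) * cE x i) • P x +
        (M * l0) • (cE x i • (P x - Sop i (i + 1) (P x))) := fun i _ => by
    rw [← cE]; module
  rw [Finset.sum_congr rfl e1, Finset.sum_congr rfl e2]
  simp only [Finset.sum_add_distrib, ← Finset.smul_sum, ← Finset.sum_smul, ← Finset.mul_sum,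
    hE, hlap, hxw, ← hr]
  have hT' : ∑ i, pd i (pd i P) x =
    (4 * a) • (∑ i, cE x i • (P x - Sop i (i + 1) (P x))) -
      (2 : ℝ) • ∑ i, wp a b x i • pd i P x := by rw [← hT]; module
  rw [hT']
  generalize (∑ i, cE x i • (P x - Sop i (i + 1) (P x))) = Q
  generalize (∑ i, wp a b x i • pd i P x) = W
  generalize (∑ i, cE x i) = c
  simp only [Finset.sum_const, Finset.card_univ, Fintype.card_fin, nsmul_eq_mul]
  have hk : n * l0 = -(ω * r * l2 + (lam + 1 - ω * r) * l1) := by linarith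
  have fin : (-(M * l0 * (V + 4 * a * (a - 1) * c - N * ω * (4 * a + 2 * b + 1))
      + 4 * ω * M * l1 * (N * (b + 2 * a)) + 4 * ω ^ 2 * M * (l2 - l1) * r
      + N * (2 * ω * M * l1)) - 2 * M * (2 * ω * l1 - ω * l0) * (2 * m) + V * (M * l0)
      + 4 * a * ((a - 1) * M * l0 * c)) =
      (N * ω * (4 * a + 2 * b + 1) + 4 * (n + m) * ω) * (M * l0) := by
    rw [hlam] at hk
    linear_combination (-4 * ω * M) * hk
  rw [smul_smul ((N : ℝ) * ω * (4 * a + 2 * b + 1) + 4 * (n + m) * ω), ← fin]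
  module

/-! ### Spin symmetries -/

lemma Sop_sComp {N d : ℕ} [NeZero N] (s : Spin N d) (i j k : Fin N) :
    Sop i j (sComp s k) = sComp s (Equiv.swap i j k) := by
  funext c
  simp only [Sop, sComp, Pi.smul_apply, Finset.sum_apply, spinPerm]
  congr 1
  refine Finset.sum_equiv (Equiv.mulLeft (Equiv.swap i j)) ?_ ?_
  · intro π
    simp
  · intro π _
    rfl

lemma Sop_sum {N d : ℕ} {ι : Type} (t : Finset ι) (i j : Fin N) (v : ι → Spin N d) :
    Sop i j (∑ k ∈ t, v k) = ∑ k ∈ t, Sop i j (v k) := by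
  funext c
  simp [Sop]

lemma Sop_sub {N d : ℕ} (i j : Fin N) (v w : Spin N d) :
    Sop i j (v - w) = Sop i j v - Sop i j w := rfl

lemma Sop_Lam {N d : ℕ} [NeZero N] (s : Spin N d) (i j : Fin N) :
    Sop i j (Lam s) = Lam s := by
  simp only [Lam, Sop_sum, Sop_sComp]
  exact Equiv.sum_comp (Equiv.swap i j) (sComp s)

/-- case (ii) polynomial -/
lemma hasFDerivAt_lin2 {N d : ℕ} (u : Fin N → Spin N d) (x : Fin N → ℝ) :
    HasFDerivAt (fun y : Fin N → ℝ => ∑ i, y i ^ 2 • u i)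
      (∑ i, ((2 * x i) • ContinuousLinearMap.proj (R := ℝ) (φ := fun _ : Fin N => ℝ) i).smulRight
        (u i)) x := by
  refine HasFDerivAt.fun_sum fun i _ => ?_
  have : HasFDerivAt (fun y : Fin N → ℝ => y i ^ 2)
    ((2 * x i) • ContinuousLinearMap.proj (R := ℝ) (φ := fun _ : Fin N => ℝ) i) x := by
    simpa using (hasFDerivAt_coord i x).pow 2
  exact this.smul_const (u i)

lemma pd_lin2 {N d : ℕ} (u : Fin N → Spin N d) (x : Fin N → ℝ) (j : Fin N) :
    pd j (fun y : Fin N → ℝ => ∑ i, y i ^ 2 • u i) x = (2 * x j) • u j := by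
  rw [pd_eq (hasFDerivAt_lin2 u x)]
  simp [Pi.single_apply, ContinuousLinearMap.sum_apply]

lemma pd2_lin2 {N d : ℕ} (u : Fin N → Spin N d) (x : Fin N → ℝ) (j : Fin N) :
    pd j (pd j (fun y : Fin N → ℝ => ∑ i, y i ^ 2 • u i)) x = (2 : ℝ) • u j := by
  have : pd j (fun y : Fin N → ℝ => ∑ i, y i ^ 2 • u i) = fun y => (2 * y j) • u j := by
    funext y; exact pd_lin2 u y j
  rw [this, pd_eq (((hasFDerivAt_coord j x).const_mul 2).smul_const (u j))]
  simp

/-- case (iii) polynomial -/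
lemma pd_quart {N : ℕ} (c e : ℝ) (x : Fin N → ℝ) (j : Fin N) :
    pd j (fun y : Fin N → ℝ => c * (∑ i, y i ^ 4) - e * (∑ i, y i ^ 2) ^ 2) x =
      4 * c * x j ^ 3 - 4 * e * (∑ i, x i ^ 2) * x j := by
  have key : HasFDerivAt (fun y : Fin N → ℝ => c * (∑ i, y i ^ 4) - e * (∑ i, y i ^ 2) ^ 2) _ x :=
    ((HasFDerivAt.fun_sum (u := Finset.univ) fun i _ =>
      (hasFDerivAt_coord i x).pow 4).const_mul c).sub
    (((hasFDerivAt_sqsum x).pow 2).const_mul e)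
  rw [pd_eq key]
  simp [Pi.single_apply, ContinuousLinearMap.sum_apply]
  ring

lemma pd2_quart {N : ℕ} (c e : ℝ) (x : Fin N → ℝ) (j : Fin N) :
    pd j (pd j (fun y : Fin N → ℝ => c * (∑ i, y i ^ 4) - e * (∑ i, y i ^ 2) ^ 2)) x =
      12 * c * x j ^ 2 - 4 * e * (∑ i, x i ^ 2) - 8 * e * x j ^ 2 := by
  have : pd j (fun y : Fin N → ℝ => c * (∑ i, y i ^ 4) - e * (∑ i, y i ^ 2) ^ 2) =
      fun y => 4 * c * y j ^ 3 - 4 * e * (∑ i, y i ^ 2) * y j := by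
    funext y; exact pd_quart c e y j
  rw [this]
  have key : HasFDerivAt (fun y : Fin N → ℝ => 4 * c * y j ^ 3 - 4 * e * (∑ i, y i ^ 2) * y j)
      _ x :=
    (((hasFDerivAt_coord j x).pow 3).const_mul (4 * c)).sub
    (((hasFDerivAt_sqsum x).const_mul (4 * e)).mul (hasFDerivAt_coord j x))
  rw [pd_eq key]
  simp [Pi.single_apply, ContinuousLinearMap.sum_apply]
  ring

lemma pd_smul_const {N d : ℕ} (q : (Fin N → ℝ) → ℝ) (hq : Differentiable ℝ q) (v : Spin N d)
    (j : Fin N) : pd j (fun y => q y • v) = fun y => pd j q y • v := by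
  funext y
  rw [pd_eq ((hq y).hasFDerivAt.smul_const v)]
  simp [pd]

theorem stmt_17 (N d : ℕ) [NeZero N] (hN : 3 ≤ N) (hd : 1 ≤ d)
    (a b ω : ℝ) (ha : 1 / 2 < a) (hb : 1 / 2 < b) (hω : 0 < ω)
    (s : Spin N d) (k : ℕ) :
    (∀ x ∈ C1 N,
      H1 a b ω (fun y =>
          (mu1 a b ω y *
            laguerre ((N : ℝ) * (2 * a + b + 1 / 2) - 1) k
              (ω * ∑ i : Fin N, (y i) ^ 2)) • Lam s) x =
        ((N : ℝ) * ω * (4 * a + 2 * b + 1) + 4 * k * ω) •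
          ((mu1 a b ω x *
            laguerre ((N : ℝ) * (2 * a + b + 1 / 2) - 1) k
              (ω * ∑ i : Fin N, (x i) ^ 2)) • Lam s)) ∧
    (1 ≤ k → ∀ x ∈ C1 N,
      H1 a b ω (fun y =>
          (mu1 a b ω y *
            laguerre ((N : ℝ) * (2 * a + b + 1 / 2) + 1) (k - 1)
              (ω * ∑ i : Fin N, (y i) ^ 2)) •
            ((N : ℝ) • (∑ i : Fin N, (y i) ^ 2 • sComp s i) -
              (∑ i : Fin N, (y i) ^ 2) • Lam s)) x =
        ((N : ℝ) * ω * (4 * a + 2 * b + 1) + 4 * k * ω) •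
          ((mu1 a b ω x *
            laguerre ((N : ℝ) * (2 * a + b + 1 / 2) + 1) (k - 1)
              (ω * ∑ i : Fin N, (x i) ^ 2)) •
            ((N : ℝ) • (∑ i : Fin N, (x i) ^ 2 • sComp s i) -
              (∑ i : Fin N, (x i) ^ 2) • Lam s))) ∧
    (2 ≤ k → ∀ x ∈ C1 N,
      H1 a b ω (fun y =>
          (mu1 a b ω y *
            laguerre ((N : ℝ) * (2 * a + b + 1 / 2) + 3) (k - 2)
              (ω * ∑ i : Fin N, (y i) ^ 2) *
            ((N : ℝ) * ((N : ℝ) * (2 * a + b + 1 / 2) + 1) * (∑ i : Fin N, (y i) ^ 4) -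
              (N : ℝ) * (4 * a + b + 3 / 2) * (∑ i : Fin N, (y i) ^ 2) ^ 2)) • Lam s) x =
        ((N : ℝ) * ω * (4 * a + 2 * b + 1) + 4 * k * ω) •
          ((mu1 a b ω x *
            laguerre ((N : ℝ) * (2 * a + b + 1 / 2) + 3) (k - 2)
              (ω * ∑ i : Fin N, (x i) ^ 2) *
            ((N : ℝ) * ((N : ℝ) * (2 * a + b + 1 / 2) + 1) * (∑ i : Fin N, (x i) ^ 4) -
              (N : ℝ) * (4 * a + b + 3 / 2) * (∑ i : Fin N, (x i) ^ 2) ^ 2)) • Lam s)) := by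
  refine ⟨fun x hx => ?_, fun hk x hx => ?_, fun hk x hx => ?_⟩
  · have z : ∀ i : Fin N, pd i (fun _ : Fin N → ℝ => Lam s) = fun _ => 0 := fun i => by
      funext y; simp [pd]
    have z' : ∀ i : Fin N, pd i (fun _ : Fin N → ℝ => (0 : Spin N d)) = fun _ => 0 := fun i => by
      funext y; simp [pd]
    have := main_lemma hN a b ω hx (fun _ => Lam s) contDiff_const k 0
      ((N : ℝ) * (2 * a + b + 1 / 2) - 1) (by ring)
      (by simp [z]) (by simp [z, z', Sop_Lam])
    simpa only [add_zero] using this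
  · obtain ⟨n, rfl⟩ : ∃ n, k = n + 1 := ⟨k - 1, by omega⟩
    have hF : ∀ y : Fin N → ℝ, ((N : ℝ) • (∑ i : Fin N, (y i) ^ 2 • sComp s i) -
              (∑ i : Fin N, (y i) ^ 2) • Lam s) =
        ∑ i, y i ^ 2 • ((N : ℝ) • sComp s i - Lam s) := fun y => by
      simp only [smul_sub, Finset.sum_sub_distrib, Finset.smul_sum, Finset.sum_smul]
      congr 1
      exact Finset.sum_congr rfl fun i _ => smul_comm _ _ _
    set u : Fin N → Spin N d := fun i => (N : ℝ) • sComp s i - Lam s with hu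
    have hu0 : ∑ i, u i = 0 := by
      simp only [hu, Finset.sum_sub_distrib, ← Finset.smul_sum]
      rw [← Lam, Finset.sum_const, Finset.card_univ, Fintype.card_fin, Nat.cast_smul_eq_nsmul,
        sub_self]
    simp only [hF]
    have hS : ∀ i : Fin N, (∑ j, x j ^ 2 • u j) - Sop i (i + 1) (∑ j, x j ^ 2 • u j) =
        (x i ^ 2 - x (i + 1) ^ 2) • (u i - u (i + 1)) := fun i => by
      have hSu : ∀ j, Sop i (i + 1) (u j) = u (Equiv.swap i (i + 1) j) := fun j => by
        simp only [hu, Sop_sub, Sop_smul, Sop_sComp, Sop_Lam]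
      have e : Sop i (i + 1) (∑ j, x j ^ 2 • u j) =
          ∑ j, x (Equiv.swap i (i + 1) j) ^ 2 • u j := by
        simp only [Sop_sum, Sop_smul, hSu]
        rw [← Equiv.sum_comp (Equiv.swap i (i + 1))]
        simp
      have hne := fin_succ_ne hN i
      rw [e, ← Finset.sum_sub_distrib]
      rw [← Finset.sum_subset (Finset.subset_univ {i, i + 1}), Finset.sum_pair hne.symm]
      · simp only [Equiv.swap_apply_left, Equiv.swap_apply_right]
        module
      · intro j _ hj
        simp only [Finset.mem_insert, Finset.mem_singleton, not_or] at hj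
        rw [Equiv.swap_apply_of_ne_of_ne hj.1 hj.2, sub_self]
    have := main_lemma hN a b ω hx (fun y => ∑ i, y i ^ 2 • u i) (by fun_prop) n 1
      ((N : ℝ) * (2 * a + b + 1 / 2) + 1) (by ring) ?_ ?_
    · simpa only [Nat.add_sub_cancel, Nat.cast_add, Nat.cast_one] using this
    · simp only [pd_lin2, Finset.smul_sum]
      refine Finset.sum_congr rfl fun i _ => ?_
      module
    · simp only [pd_lin2, pd2_lin2, hS, ← Finset.smul_sum, hu0, smul_zero, zero_add]
      have e1 : ∀ i ∈ (Finset.univ : Finset (Fin N)), cE x i • (x i ^ 2 - x (i + 1) ^ 2) •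
          (u i - u (i + 1)) = (2 * x i ^ 2 * gA x i - 1) • u i -
            (-(2 * x (i + 1) ^ 2 * gB x (i + 1)) + 1) • u (i + 1) := fun i _ => by
        have h := gA_mul hN hx i
        have hc : cE x i * (x i ^ 2 - x (i + 1) ^ 2) = (x i ^ 2 + x (i + 1) ^ 2) * gA x i := by
          have h0 := C1_ne hx (fin_succ_ne hN i).symm
          rw [cE, gA]; field_simp
        rw [smul_smul, hc, gB_succ]
        have h1 : 2 * x i ^ 2 * gA x i - 1 = (x i ^ 2 + x (i + 1) ^ 2) * gA x i := by
          linear_combination h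
        have h2 : -(2 * x (i + 1) ^ 2 * -gA x i) + 1 = (x i ^ 2 + x (i + 1) ^ 2) * gA x i := by
          linear_combination -h
        rw [h1, h2, smul_sub]
      have e2 : ∀ i ∈ (Finset.univ : Finset (Fin N)), wp a b x i • (2 * x i) • u i =
          (2 * b) • u i + (2 * a) • ((2 * x i ^ 2 * (gA x i + gB x i)) • u i) := fun i _ => by
        have h0 := (C1_pos hx i).ne'
        have : wp a b x i * (2 * x i) =
            2 * b + (2 * a) * (2 * x i ^ 2 * (gA x i + gB x i)) := by
          rw [wp]; field_simp
        rw [smul_smul, this]; module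
      have sh : ∑ i, (-(2 * x (i + 1) ^ 2 * gB x (i + 1)) + 1) • u (i + 1) =
          ∑ i, (-(2 * x i ^ 2 * gB x i) + 1) • u i :=
        Equiv.sum_comp (Equiv.addRight (1 : Fin N))
          (fun i => (-(2 * x i ^ 2 * gB x i) + 1) • u i)
      rw [Finset.sum_congr rfl e1, Finset.sum_congr rfl e2, Finset.sum_sub_distrib, sh, ← Finset.sum_sub_distrib,
        Finset.sum_add_distrib, ← Finset.smul_sum, hu0, smul_zero, zero_add, ← Finset.smul_sum]
      have e3 : ∀ i ∈ (Finset.univ : Finset (Fin N)), (2 * x i ^ 2 * gA x i - 1) • u i -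
            (-(2 * x i ^ 2 * gB x i) + 1) • u i =
          (2 * x i ^ 2 * (gA x i + gB x i)) • u i - (2 : ℝ) • u i := fun i _ => by module
      rw [Finset.sum_congr rfl e3, Finset.sum_sub_distrib, ← Finset.smul_sum (f := u), hu0]
      module
  · obtain ⟨n, rfl⟩ : ∃ n, k = n + 2 := ⟨k - 2, by omega⟩
    set c := (N : ℝ) * ((N : ℝ) * (2 * a + b + 1 / 2) + 1) with hc
    set e := (N : ℝ) * (4 * a + b + 3 / 2) with he
    simp only [mul_smul (_ * _) (_ - _) (Lam s)]
    have dq : Differentiable ℝ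
        (fun y : Fin N → ℝ => c * (∑ i, y i ^ 4) - e * (∑ i, y i ^ 2) ^ 2) := by fun_prop
    have p1 : ∀ i : Fin N, pd i (fun y : Fin N → ℝ =>
        (c * (∑ i, y i ^ 4) - e * (∑ i, y i ^ 2) ^ 2) • Lam s) =
        fun y => (4 * c * y i ^ 3 - 4 * e * (∑ i, y i ^ 2) * y i) • Lam s := fun i => by
      rw [pd_smul_const _ dq]; funext y; rw [pd_quart]
    have p2 : ∀ i : Fin N, pd i (pd i (fun y : Fin N → ℝ =>
        (c * (∑ i, y i ^ 4) - e * (∑ i, y i ^ 2) ^ 2) • Lam s)) x =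
        (12 * c * x i ^ 2 - 4 * e * (∑ i, x i ^ 2) - 8 * e * x i ^ 2) • Lam s := fun i => by
      rw [pd_smul_const _ dq, pd_smul_const]
      · simp only [pd2_quart]
      · have : pd i (fun y : Fin N → ℝ => c * (∑ i, y i ^ 4) - e * (∑ i, y i ^ 2) ^ 2) =
          fun y => 4 * c * y i ^ 3 - 4 * e * (∑ i, y i ^ 2) * y i := by
          funext y; exact pd_quart c e y i
        rw [this]; fun_prop
    have := main_lemma hN a b ω hx
      (fun y => (c * (∑ i, y i ^ 4) - e * (∑ i, y i ^ 2) ^ 2) • Lam s) (by fun_prop) n 2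
      ((N : ℝ) * (2 * a + b + 1 / 2) + 3) (by ring) ?_ ?_
    · simpa only [Nat.add_sub_cancel, Nat.cast_add, Nat.cast_ofNat] using this
    · simp only [p1, smul_smul, ← Finset.sum_smul]
      congr 1
      have : ∀ i ∈ (Finset.univ : Finset (Fin N)),
          x i * (4 * c * x i ^ 3 - 4 * e * (∑ i, x i ^ 2) * x i) =
          (4 * c) * x i ^ 4 - (4 * e * (∑ i, x i ^ 2)) * x i ^ 2 := fun i _ => by ring
      rw [Finset.sum_congr rfl this, Finset.sum_sub_distrib, ← Finset.mul_sum, ← Finset.mul_sum]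
      ring
    · have : ∀ i ∈ (Finset.univ : Finset (Fin N)),
          wp a b x i * (4 * c * x i ^ 3 - 4 * e * (∑ i, x i ^ 2) * x i) =
          (4 * c) * (x i ^ 3 * wp a b x i) -
            (4 * e * (∑ i, x i ^ 2)) * (x i * wp a b x i) := fun i _ => by ring
      simp only [p2]
      simp only [p1, smul_smul, ← Finset.sum_smul, Sop_smul, Sop_Lam, sub_self, smul_zero,
        Finset.sum_const_zero]
      rw [Finset.sum_congr rfl this, ← add_smul]
      simp only [Finset.sum_sub_distrib, ← Finset.mul_sum, sum_xw hN a b hx, sum_x3w hN a b hx,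
        Finset.sum_const, Finset.card_univ, Fintype.card_fin, nsmul_eq_mul]
      convert zero_smul ℝ (Lam s) using 2
      rw [hc, he]
      ring
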